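/- arXiv:2602.07790 — 2 statements merged into one kernel-verified Lean document; each statement's English description precedes it below -/
import Mathlib

section
/- Let λ > 0, let V, k, d be positive natural numbers, and for each modality v ∈ {1, …, V} and domain i ∈ {1, …, k} let x_i^{[v]} ∈ ℝ^d and δ_i^{[v]} ∈ {0, 1}. Set K^{[v]}_{ij} = ⟨x_i^{[v]}, x_j^{[v]}⟩, K_MM = ∑_{v=1}^V K^{[v]}, and δ_i = ∑_{v=1}^V δ_i^{[v]}. Then a tuple (w^{[1]}, …, w^{[V]}, α) ∈ (ℝ^d)^V × ℝ^k satisfies the stationarity system w^{[v]} = ∑_{i=1}^k α_i x_i^{[v]} for every v, and ∑_{v=1}^V δ_i^{[v]} − ∑_{v=1}^V ⟨w^{[v]}, x_i^{[v]}⟩ − λ α_i = 0 for every i, if and only if α = (K_MM + λ I_k)^{-1} δ and w^{[v]} = ∑_{i=1}^k α_i x_i^{[v]} for every v. In particular this system has a unique solution. -/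
/-!
Eliminating `w` through the representer equations `w v = ∑ j, α j • x v j` turns the remaining
stationarity equations into the linear system `(K_MM + λ I) α = δ`. Each `K v` is a Gram matrix
`X Xᵀ`, hence positive semidefinite, so `K_MM + λ I` is positive definite for `λ > 0`, therefore
invertible, and the system has exactly one solution `α`, which in turn determines `w`.
-/

/-- A sum of Gram matrices shifted by `λ I` with `λ > 0` is positive definite, hence invertible. -/
theorem isUnit_det_gram_sum_add {V k d : ℕ} (lam : ℝ) (hlam : 0 < lam)
    (x : Fin V → Fin k → Fin d → ℝ) (K : Fin V → Matrix (Fin k) (Fin k) ℝ)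
    (hKv : ∀ v i j, K v i j = x v i ⬝ᵥ x v j) :
    IsUnit ((∑ v, K v) + lam • (1 : Matrix (Fin k) (Fin k) ℝ)).det := by
  have hK : ∀ v, (K v).PosSemidef := fun v => by
    have h : K v = Matrix.of (x v) * (Matrix.of (x v)).conjTranspose := by
      ext i j
      simp [hKv, Matrix.mul_apply, dotProduct]
    rw [h]
    exact Matrix.posSemidef_self_mul_conjTranspose _
  have hsum : (∑ v, K v).PosSemidef := Matrix.posSemidef_sum _ fun v _ => hK v
  have hpos : ((∑ v, K v) + lam • (1 : Matrix (Fin k) (Fin k) ℝ)).PosDef :=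
    Matrix.PosDef.posSemidef_add hsum (Matrix.PosDef.one.smul hlam)
  exact (Matrix.isUnit_iff_isUnit_det _).1 hpos.isUnit

open Matrix in
/-- Pairing `w v = ∑ j, α j • x v j` with `x v i` and summing over `v` gives `(K_MM α) i`. -/
theorem sum_dotProduct_eq_gram_mulVec {V k d : ℕ}
    (x : Fin V → Fin k → Fin d → ℝ) (K : Fin V → Matrix (Fin k) (Fin k) ℝ)
    (hKv : ∀ v i j, K v i j = x v i ⬝ᵥ x v j)
    (w : Fin V → Fin d → ℝ) (α : Fin k → ℝ) (hw : ∀ v, w v = ∑ i, α i • x v i) (i : Fin k) :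
    ∑ v, w v ⬝ᵥ x v i = ((∑ v, K v) *ᵥ α) i := by
  rw [Matrix.sum_mulVec, Finset.sum_apply]
  refine Finset.sum_congr rfl fun v _ => ?_
  rw [hw, sum_dotProduct]
  simp only [mulVec, dotProduct.eq_1 (fun j => K v i j)]
  refine Finset.sum_congr rfl fun j _ => ?_
  rw [smul_dotProduct, hKv, dotProduct_comm, smul_eq_mul, mul_comm]

open Matrix in
theorem stmt_9 (lam : ℝ) (hlam : 0 < lam) (V k d : ℕ)
    (hV : 0 < V) (hk : 0 < k) (hd : 0 < d)
    (x : Fin V → Fin k → Fin d → ℝ) (δ : Fin V → Fin k → ℝ)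
    (hδ : ∀ v i, δ v i = 0 ∨ δ v i = 1)
    (K : Fin V → Matrix (Fin k) (Fin k) ℝ)
    (hKv : ∀ v i j, K v i j = x v i ⬝ᵥ x v j)
    (Kmm : Matrix (Fin k) (Fin k) ℝ) (hKmm : Kmm = ∑ v, K v)
    (dtot : Fin k → ℝ) (hdtot : ∀ i, dtot i = ∑ v, δ v i) :
    (∀ (w : Fin V → Fin d → ℝ) (α : Fin k → ℝ),
      ((∀ v, w v = ∑ i, α i • x v i) ∧
        (∀ i, (∑ v, δ v i) - (∑ v, w v ⬝ᵥ x v i) - lam * α i = 0)) ↔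
      (α = (Kmm + lam • (1 : Matrix (Fin k) (Fin k) ℝ))⁻¹ *ᵥ dtot ∧
        ∀ v, w v = ∑ i, α i • x v i)) ∧
    (∃! p : (Fin V → Fin d → ℝ) × (Fin k → ℝ),
      (∀ v, p.1 v = ∑ i, p.2 i • x v i) ∧
      (∀ i, (∑ v, δ v i) - (∑ v, p.1 v ⬝ᵥ x v i) - lam * p.2 i = 0)) := by
  have hdet := isUnit_det_gram_sum_add lam hlam x K hKv
  rw [← hKmm] at hdet
  have key : ∀ (w : Fin V → Fin d → ℝ) (α : Fin k → ℝ),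
      ((∀ v, w v = ∑ i, α i • x v i) ∧
        (∀ i, (∑ v, δ v i) - (∑ v, w v ⬝ᵥ x v i) - lam * α i = 0)) ↔
      (α = (Kmm + lam • (1 : Matrix (Fin k) (Fin k) ℝ))⁻¹ *ᵥ dtot ∧
        ∀ v, w v = ∑ i, α i • x v i) := by
    intro w α
    rw [and_comm]
    refine and_congr_left fun hw => ?_
    have hlin : (∀ i, (∑ v, δ v i) - (∑ v, w v ⬝ᵥ x v i) - lam * α i = 0) ↔
        (Kmm + lam • (1 : Matrix (Fin k) (Fin k) ℝ)) *ᵥ α = dtot := by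
      rw [funext_iff]
      refine forall_congr' fun i => ?_
      rw [sum_dotProduct_eq_gram_mulVec x K hKv w α hw i, ← hKmm, ← hdtot, add_mulVec,
        smul_mulVec, one_mulVec, Pi.add_apply, Pi.smul_apply, smul_eq_mul]
      constructor <;> intro h <;> linarith
    rw [hlin]
    constructor
    · intro h
      rw [← h, mulVec_mulVec, nonsing_inv_mul _ hdet, one_mulVec]
    · intro h
      rw [h, mulVec_mulVec, mul_nonsing_inv _ hdet, one_mulVec]
  refine ⟨key, ?_⟩
  set α₀ := (Kmm + lam • (1 : Matrix (Fin k) (Fin k) ℝ))⁻¹ *ᵥ dtot with hα₀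
  refine ⟨(fun v => ∑ i, α₀ i • x v i, α₀), (key _ _).2 ⟨rfl, fun _ => rfl⟩, ?_⟩
  rintro ⟨w, α⟩ h
  obtain ⟨rfl, hw⟩ := (key w α).1 h
  exact Prod.ext (funext hw) rfl
end

section
/- Let λ > 0, let V, k, d be positive natural numbers, fix a domain index j ∈ {1, …, k}, and for each modality v and domain i let x_i^{[v]} ∈ ℝ^d and δ_i^{[v]} ∈ {0, 1}. Set K^{[v]}_{ip} = ⟨x_i^{[v]}, x_p^{[v]}⟩, K_MM = ∑_{v=1}^V K^{[v]}, δ_i = ∑_{v=1}^V δ_i^{[v]}, and let γ ∈ ℝ^k be the indicator vector of j (γ_j = 1, γ_i = 0 for i ≠ j). Let α ∈ ℝ^k and w^{[v]} ∈ ℝ^d satisfy w^{[v]} = ∑_{i=1}^k α_i x_i^{[v]} for every v and ∑_{v=1}^V (δ_i^{[v]} γ_i − ⟨w^{[v]}, x_i^{[v]}⟩) − λ α_i = 0 for every i. Then α = δ_j (K_MM + λ I_k)^{-1} e_j, where e_j is the j-th standard basis vector, and the resulting score satisfies ⟨w^{[v]}, x_j^{[v]}⟩ = δ_j [K^{[v]}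 (K_MM + λ I_k)^{-1}]_{jj} for every modality v. -/
/-!
Each `K v` is the Gram matrix `X * Xᵀ` of the rows `x v i`, hence positive semidefinite, so
`Kmm + lam • 1` is positive definite and in particular invertible. Since `⟨w v, x v i⟩ = (K v *ᵥ α) i`,
the stationarity equations are the linear system `(Kmm + lam • 1) *ᵥ α = dtot j • e_j`, whose
unique solution is the asserted `α`; substituting it into `(K v *ᵥ α) j` gives the score.
-/


open Matrix in
theorem stmt_18 (lam : ℝ) (hlam : 0 < lam) (V k d : ℕ)
    (hV : 0 < V) (hk : 0 < k) (hd : 0 < d) (j : Fin k)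
    (x : Fin V → Fin k → Fin d → ℝ) (δ : Fin V → Fin k → ℝ)
    (hδ : ∀ v i, δ v i = 0 ∨ δ v i = 1)
    (K : Fin V → Matrix (Fin k) (Fin k) ℝ)
    (hKv : ∀ v i p, K v i p = x v i ⬝ᵥ x v p)
    (Kmm : Matrix (Fin k) (Fin k) ℝ) (hKmm : Kmm = ∑ v, K v)
    (dtot : Fin k → ℝ) (hdtot : ∀ i, dtot i = ∑ v, δ v i)
    (γ : Fin k → ℝ) (hγ : γ = Pi.single j 1)
    (α : Fin k → ℝ) (w : Fin V → Fin d → ℝ)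
    (hw : ∀ v, w v = ∑ i, α i • x v i)
    (hstat : ∀ i, (∑ v, (δ v i * γ i - w v ⬝ᵥ x v i)) - lam * α i = 0) :
    α = dtot j • ((Kmm + lam • (1 : Matrix (Fin k) (Fin k) ℝ))⁻¹ *ᵥ Pi.single j 1) ∧
    ∀ v, w v ⬝ᵥ x v j =
      dtot j * (K v * (Kmm + lam • (1 : Matrix (Fin k) (Fin k) ℝ))⁻¹) j j := by
  have hpsd : Kmm.PosSemidef := by
    rw [hKmm]
    refine Matrix.posSemidef_sum _ fun v _ => ?_
    have hgram : K v = Matrix.of (x v) * (Matrix.of (x v))ᴴ := by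
      ext i p
      simp [hKv, Matrix.mul_apply, dotProduct]
    rw [hgram]
    exact Matrix.posSemidef_self_mul_conjTranspose _
  have hpd : (Kmm + lam • (1 : Matrix (Fin k) (Fin k) ℝ)).PosDef :=
    Matrix.PosDef.posSemidef_add hpsd (Matrix.PosDef.one.smul hlam)
  have hdet : IsUnit (Kmm + lam • (1 : Matrix (Fin k) (Fin k) ℝ)).det :=
    (Matrix.isUnit_iff_isUnit_det _).mp hpd.isUnit
  have hscore : ∀ v i, w v ⬝ᵥ x v i = (K v *ᵥ α) i := by
    intro v i
    rw [hw, sum_dotProduct]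
    simp only [Matrix.mulVec, smul_dotProduct, smul_eq_mul]
    rw [dotProduct]
    refine Finset.sum_congr rfl fun p _ => ?_
    rw [hKv, dotProduct_comm (x v i), mul_comm]
  have hsys : (Kmm + lam • (1 : Matrix (Fin k) (Fin k) ℝ)) *ᵥ α = dtot j • Pi.single j 1 := by
    ext i
    have h := hstat i
    simp only [hscore, Finset.sum_sub_distrib, ← Finset.sum_mul, ← hdtot] at h
    have hK : (Kmm *ᵥ α) i = ∑ v, (K v *ᵥ α) i := by
      rw [hKmm, Matrix.sum_mulVec, Finset.sum_apply]
    -- `γ` vanishes away from `j`, so the weight `dtot i` may be replaced by `dtot j`.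
    have hγi : dtot i * γ i = dtot j * (Pi.single j 1 : Fin k → ℝ) i := by
      rw [hγ]
      by_cases hij : i = j
      · rw [hij]
      · simp [hij]
    simp only [Matrix.add_mulVec, Matrix.smul_mulVec, Matrix.one_mulVec, Pi.add_apply,
      Pi.smul_apply, smul_eq_mul]
    linarith
  have hα : α =
      dtot j • ((Kmm + lam • (1 : Matrix (Fin k) (Fin k) ℝ))⁻¹ *ᵥ Pi.single j 1) := by
    rw [← Matrix.mulVec_smul, ← hsys, Matrix.mulVec_mulVec, Matrix.nonsing_inv_mul _ hdet,
      Matrix.one_mulVec]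
  refine ⟨hα, fun v => ?_⟩
  rw [hscore, hα, Matrix.mulVec_smul, Matrix.mulVec_mulVec, Matrix.mulVec_single_one]
  simp
end
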